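/- arXiv:1805.08901 — 6 statements merged into one kernel-verified Lean document; each statement's English description precedes it below -/
import Mathlib

section
/- Let V be a finite set, G a simple graph on V, and let A, B be disjoint sets with A ∪ B = V. Let T ≥ 0 and c ≥ 0 be real numbers and y : V → {−1, 1}. Define the score of the partition (A,B) as score(A,B) = T·(e_G(A) + e_G(B)) + c·(|{i ∈ A : y(i) = 1}| + |{j ∈ B : y(j) = −1}|). Suppose there exist i ∈ A and j ∈ B such that T·(e_G(i,B) − e_G(i,A)) − c·y(i) ≥ T and T·(e_G(j,A) − e_G(j,B)) + c·y(j) ≥ T. Then, with Â = (A \ {i}) ∪ {j} and B̂ = (B \ {j}) ∪ {i}, one has score(Â, B̂) ≥ score(A, B). -/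
open Finset

/-- Number of edges of `G` with both endpoints in `A`
(counted as ordered adjacent pairs, halved). -/
def edgesWithin {V : Type*} [DecidableEq V] (G : SimpleGraph V) [DecidableRel G.Adj]
    (A : Finset V) : ℕ :=
  ((A ×ˢ A).filter (fun p => G.Adj p.1 p.2)).card / 2

/-- Number of edges of `G` between the vertex `v` and the vertices of `S`. -/
def edgesBetween {V : Type*} (G : SimpleGraph V) [DecidableRel G.Adj]
    (v : V) (S : Finset V) : ℕ :=
  (S.filter (fun u => G.Adj v u)).card

/-- The score of the partition `(A, B)`:
`T·(e_G(A) + e_G(B)) + c·(|{i ∈ A : y i = 1}| + |{j ∈ B : y j = -1}|)`. -/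
noncomputable def score {V : Type*} [DecidableEq V] (G : SimpleGraph V) [DecidableRel G.Adj]
    (T c : ℝ) (y : V → ℝ) (A B : Finset V) : ℝ :=
  T * ((edgesWithin G A : ℝ) + (edgesWithin G B : ℝ))
    + c * (((A.filter (fun i => y i = 1)).card : ℝ)
        + ((B.filter (fun j => y j = (-1 : ℝ))).card : ℝ))

lemma eb_insert {V : Type*} [DecidableEq V] (G : SimpleGraph V) [DecidableRel G.Adj]
    (u v : V) (S : Finset V) (h : v ∉ S) :
    edgesBetween G u (insert v S) = edgesBetween G u S + if G.Adj u v then 1 else 0 := by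
  unfold edgesBetween
  rw [Finset.filter_insert]
  split_ifs with h'
  · rw [Finset.card_insert_of_notMem (by simp [h])]
  · simp

lemma ew_insert {V : Type*} [DecidableEq V] (G : SimpleGraph V) [DecidableRel G.Adj]
    (v : V) (S : Finset V) (h : v ∉ S) :
    edgesWithin G (insert v S) = edgesWithin G S + edgesBetween G v S := by
  have key : (((insert v S) ×ˢ (insert v S)).filter (fun p => G.Adj p.1 p.2)).card
      = ((S ×ˢ S).filter (fun p => G.Adj p.1 p.2)).card + edgesBetween G v S * 2 := by
    unfold edgesBetween
    simp only [Finset.card_filter, Finset.sum_product]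
    rw [Finset.sum_insert h]
    simp only [Finset.sum_insert h, Finset.sum_add_distrib]
    simp only [G.adj_comm _ v, SimpleGraph.irrefl, if_false]
    ring
  unfold edgesWithin
  rw [key]
  omega

lemma cf_insert {V : Type*} [DecidableEq V] (y : V → ℝ) (r : ℝ)
    (v : V) (S : Finset V) (h : v ∉ S) :
    (((insert v S).filter (fun i => y i = r)).card : ℝ)
      = ((S.filter (fun i => y i = r)).card : ℝ) + if y v = r then 1 else 0 := by
  rw [Finset.filter_insert]
  split_ifs with h'
  · rw [Finset.card_insert_of_notMem (by simp [h])]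
    simp
  · simp

theorem swap_increases_score_noisy_labels
    {V : Type*} [Fintype V] [DecidableEq V]
    (G : SimpleGraph V) [DecidableRel G.Adj]
    (A B : Finset V) (hdisj : Disjoint A B) (hcover : A ∪ B = Finset.univ)
    (T c : ℝ) (hT : 0 ≤ T) (hc : 0 ≤ c)
    (y : V → ℝ) (hy : ∀ v, y v = 1 ∨ y v = -1)
    (i j : V) (hi : i ∈ A) (hj : j ∈ B)
    (h1 : T * ((edgesBetween G i B : ℝ) - (edgesBetween G i A : ℝ)) - c * y i ≥ T)
    (h2 : T * ((edgesBetween G j A : ℝ) - (edgesBetween G j B : ℝ)) + c * y j ≥ T) :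
    score G T c y (insert j (A.erase i)) (insert i (B.erase j))
      ≥ score G T c y A B := by
  have hjA : j ∉ A := fun h => Finset.disjoint_left.mp hdisj h hj
  have hiB : i ∉ B := fun h => Finset.disjoint_left.mp hdisj hi h
  obtain ⟨A', hA', rfl⟩ : ∃ A', i ∉ A' ∧ A = insert i A' :=
    ⟨A.erase i, by simp, (Finset.insert_erase hi).symm⟩
  obtain ⟨B', hB', rfl⟩ : ∃ B', j ∉ B' ∧ B = insert j B' :=
    ⟨B.erase j, by simp, (Finset.insert_erase hj).symm⟩
  rw [Finset.erase_insert hA', Finset.erase_insert hB']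
  have hjA' : j ∉ A' := fun h => hjA (Finset.mem_insert_of_mem h)
  have hiB' : i ∉ B' := fun h => hiB (Finset.mem_insert_of_mem h)
  unfold score
  rw [cf_insert y _ _ _ hA', cf_insert y _ _ _ hB', cf_insert y _ _ _ hjA',
    cf_insert y _ _ _ hiB', ew_insert G _ _ hA', ew_insert G _ _ hB', ew_insert G _ _ hjA',
    ew_insert G _ _ hiB']
  rw [eb_insert G _ _ _ hA', eb_insert G _ _ _ hB'] at h1 h2
  have e : (if G.Adj j i then 1 else 0 : ℕ) = if G.Adj i j then 1 else 0 := by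
    simp only [G.adj_comm j i]
  rw [e] at h2
  simp only [SimpleGraph.irrefl, if_false] at h1 h2
  have hl : ∀ v, ((if y v = 1 then 1 else 0 : ℝ) - if y v = -1 then 1 else 0) = y v := by
    intro v
    rcases hy v with h | h <;> rw [h] <;> norm_num
  have li := congrArg (c * ·) (hl i)
  have lj := congrArg (c * ·) (hl j)
  have ha : T * ((if G.Adj i j then 1 else 0 : ℕ) : ℝ) ≤ T ∧
      0 ≤ T * ((if G.Adj i j then 1 else 0 : ℕ) : ℝ) := by
    split_ifs <;> simp [hT]
  push_cast at h1 h2 ha ⊢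
  obtain ⟨ha1, ha2⟩ := ha
  linarith
end

section
/- Let V be a finite set, G a simple graph on V, and let A, B be disjoint sets with A ∪ B = V. Suppose there exist i ∈ A and j ∈ B such that e_G(i,B) − e_G(i,A) ≥ 1 and e_G(j,A) − e_G(j,B) ≥ 1. Then, with Â = (A \ {i}) ∪ {j} and B̂ = (B \ {j}) ∪ {i}, one has e_G(Â) + e_G(B̂) ≥ e_G(A) + e_G(B). -/
open Finset

theorem between_insert {V : Type*} [DecidableEq V] (G : SimpleGraph V) [DecidableRel G.Adj]
    (w v : V) (S : Finset V) (hv : v ∉ S) :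
    edgesBetween G w (insert v S) = edgesBetween G w S + if G.Adj w v then 1 else 0 := by
  unfold edgesBetween
  rw [Finset.filter_insert]
  split_ifs with h
  · rw [Finset.card_insert_of_notMem (by simp [hv])]
  · rfl

theorem within_insert {V : Type*} [DecidableEq V] (G : SimpleGraph V) [DecidableRel G.Adj]
    (v : V) (S : Finset V) (hv : v ∉ S) :
    edgesWithin G (insert v S) = edgesWithin G S + edgesBetween G v S := by
  have key : (((insert v S) ×ˢ (insert v S)).filter (fun p => G.Adj p.1 p.2)).card
      = ((S ×ˢ S).filter (fun p => G.Adj p.1 p.2)).card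
        + 2 * (S.filter (fun u => G.Adj v u)).card := by
    simp only [Finset.card_filter, Finset.sum_product, Finset.sum_insert hv,
      Finset.sum_add_distrib, G.irrefl, G.adj_comm _ v, if_false]
    ring
  unfold edgesWithin edgesBetween
  rw [key]
  omega

theorem swap_increases_within_edges
    {V : Type*} [Fintype V] [DecidableEq V]
    (G : SimpleGraph V) [DecidableRel G.Adj]
    (A B : Finset V) (hdisj : Disjoint A B) (hcover : A ∪ B = Finset.univ)
    (i j : V) (hi : i ∈ A) (hj : j ∈ B)
    (h1 : (1 : ℤ) ≤ (edgesBetween G i B : ℤ) - (edgesBetween G i A : ℤ))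
    (h2 : (1 : ℤ) ≤ (edgesBetween G j A : ℤ) - (edgesBetween G j B : ℤ)) :
    edgesWithin G A + edgesWithin G B
      ≤ edgesWithin G (insert j (A.erase i)) + edgesWithin G (insert i (B.erase j)) := by
  have hiB : i ∉ B.erase j := fun h =>
    Finset.disjoint_left.mp hdisj hi (Finset.mem_of_mem_erase h)
  have hjA : j ∉ A.erase i := fun h =>
    Finset.disjoint_left.mp hdisj (Finset.mem_of_mem_erase h) hj
  have wA := within_insert G i (A.erase i) (Finset.notMem_erase i A)
  have wB := within_insert G j (B.erase j) (Finset.notMem_erase j B)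
  have b1 := between_insert G i i (A.erase i) (Finset.notMem_erase i A)
  have b2 := between_insert G j i (A.erase i) (Finset.notMem_erase i A)
  have b3 := between_insert G i j (B.erase j) (Finset.notMem_erase j B)
  have b4 := between_insert G j j (B.erase j) (Finset.notMem_erase j B)
  rw [Finset.insert_erase hi] at wA b1 b2
  rw [Finset.insert_erase hj] at wB b3 b4
  rw [within_insert G j _ hjA, within_insert G i _ hiB]
  split_ifs at b1 b2 b3 b4 <;> simp_all <;> omega
end

section
/- For reals a > b > 0 set T = log(a/b); for β ∈ ℝ set γ = √(β² + a·b·T²) and η(a,b,β) = a + b + β − 2γ/T + (β/T)·log((γ+β)/(γ−β)). Then for every β ∈ ℝ, the function g(t) = 2βt + a + b − b·e^{T·t} − a·e^{−T·t} attains its maximum over t ∈ ℝ at t* = (1/T)·log((γ+β)/(b·T)), and g(t*) = η(a,b,β). -/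
theorem sup_eval_eta (a b : ℝ) (hb : 0 < b) (hab : b < a) (β : ℝ) :
    let T : ℝ := Real.log (a / b)
    let γ : ℝ := Real.sqrt (β ^ 2 + a * b * T ^ 2)
    let η : ℝ := a + b + β - 2 * γ / T + (β / T) * Real.log ((γ + β) / (γ - β))
    let g : ℝ → ℝ := fun t => 2 * β * t + a + b - b * Real.exp (T * t) - a * Real.exp (-(T * t))
    let tstar : ℝ := (1 / T) * Real.log ((γ + β) / (b * T))
    (∀ t : ℝ, g t ≤ g tstar) ∧ g tstar = η := by
  intro T γ η g s
  have ha : 0 < a := hb.trans hab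
  have hT : 0 < T := Real.log_pos ((one_lt_div hb).2 hab)
  have hab0 : 0 < a * b * T ^ 2 := by positivity
  have hγ2 : γ ^ 2 = β ^ 2 + a * b * T ^ 2 := Real.sq_sqrt (by positivity)
  have hγ : |β| < γ := by
    rw [← Real.sqrt_sq_eq_abs]
    exact Real.sqrt_lt_sqrt (sq_nonneg _) (by linarith)
  have hp : 0 < γ + β := by linarith [neg_abs_le β]
  have hm : 0 < γ - β := by linarith [le_abs_self β]
  have hTs : T * s = Real.log ((γ + β) / (b * T)) := by
    simp only [s]; field_simp
  have he : Real.exp (T * s) = (γ + β) / (b * T) := by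
    rw [hTs, Real.exp_log (by positivity)]
  have hP : b * Real.exp (T * s) = (γ + β) / T := by
    rw [he]; field_simp
  have hQ : a * Real.exp (-(T * s)) = (γ - β) / T := by
    rw [Real.exp_neg, he, inv_div, eq_div_iff hT.ne', mul_assoc, div_mul_eq_mul_div,
      ← mul_div_assoc, div_eq_iff hp.ne']
    linear_combination -hγ2
  have hlog : 2 * (T * s) = T + Real.log ((γ + β) / (γ - β)) := by
    have h1 : (γ + β) * (γ - β) = a * b * T ^ 2 := by linear_combination hγ2
    have h2 : Real.log (γ + β) + Real.log (γ - β)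
        = Real.log a + Real.log b + 2 * Real.log T := by
      rw [← Real.log_mul hp.ne' hm.ne', h1, Real.log_mul (by positivity) (by positivity),
        Real.log_mul ha.ne' hb.ne', Real.log_pow]
      norm_num
    have h3 : T = Real.log a - Real.log b := Real.log_div ha.ne' hb.ne'
    rw [hTs, Real.log_div hp.ne' (by positivity), Real.log_mul hb.ne' hT.ne',
      Real.log_div hp.ne' hm.ne']
    linarith
  constructor
  · intro t
    show 2 * β * t + a + b - b * Real.exp (T * t) - a * Real.exp (-(T * t)) ≤
      2 * β * s + a + b - b * Real.exp (T * s) - a * Real.exp (-(T * s))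
    have e1 : b * Real.exp (T * t) = (γ + β) / T * Real.exp (T * (t - s)) := by
      rw [← hP, mul_assoc, ← Real.exp_add]; ring_nf
    have e2 : a * Real.exp (-(T * t)) = (γ - β) / T * Real.exp (-(T * (t - s))) := by
      rw [← hQ, mul_assoc, ← Real.exp_add]; ring_nf
    rw [e1, e2, hP, hQ]
    have i1 := mul_le_mul_of_nonneg_left (Real.add_one_le_exp (T * (t - s))) (div_pos hp hT).le
    have i2 := mul_le_mul_of_nonneg_left (Real.add_one_le_exp (-(T * (t - s)))) (div_pos hm hT).le
    have i3 : (γ + β) / T * (T * (t - s) + 1) + (γ - β) / T * (-(T * (t - s)) + 1)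
        = 2 * β * (t - s) + (γ + β) / T + (γ - β) / T := by
      field_simp; ring
    linarith
  · show 2 * β * s + a + b - b * Real.exp (T * s) - a * Real.exp (-(T * s)) =
      a + b + β - 2 * γ / T + (β / T) * Real.log ((γ + β) / (γ - β))
    rw [hP, hQ, show Real.log ((γ + β) / (γ - β)) = 2 * (T * s) - T by linarith]
    field_simp; ring
end

section
/- For reals a > b > 0 set T = log(a/b); for β > 0 set γ = √(β² + a·b·T²) and η(a,b,β) = a + b + β − 2γ/T + (β/T)·log((γ+β)/(γ−β)). Then β > 1 implies η(a,b,β) > 2. -/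
theorem eta_gt_two_of_beta_gt_one (a b : ℝ) (hb : 0 < b) (hab : b < a)
    (β : ℝ) (hβ : 0 < β) (hβ1 : 1 < β) :
    let T : ℝ := Real.log (a / b)
    let γ : ℝ := Real.sqrt (β ^ 2 + a * b * T ^ 2)
    let η : ℝ := a + b + β - 2 * γ / T + (β / T) * Real.log ((γ + β) / (γ - β))
    2 < η := by
  intro T γ η
  have ha : 0 < a := hb.trans hab
  have hT : 0 < T := Real.log_pos ((one_lt_div hb).2 hab)
  have hTe : T = Real.log a - Real.log b := Real.log_div ha.ne' hb.ne'
  have hpos : 0 < a * b * T ^ 2 := by positivity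
  have hsq : γ ^ 2 = β ^ 2 + a * b * T ^ 2 := Real.sq_sqrt (by positivity)
  have hg0 : 0 ≤ γ := Real.sqrt_nonneg _
  have hg : β < γ := by nlinarith
  have hη : η = a + b + β - 2 * γ / T + (β / T) * Real.log ((γ + β) / (γ - β)) := rfl
  clear_value η γ T
  have hp : 0 < γ + β := by linarith
  have hm : 0 < γ - β := by linarith
  rw [Real.log_div hp.ne' hm.ne'] at hη
  have hprod : Real.log a + Real.log T + (Real.log b + Real.log T)
      = Real.log (γ + β) + Real.log (γ - β) := by
    rw [← Real.log_mul ha.ne' hT.ne', ← Real.log_mul hb.ne' hT.ne',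
      ← Real.log_mul (by positivity) (by positivity), ← Real.log_mul hp.ne' hm.ne']
    congr 1
    nlinarith
  have key : ∀ x y : ℝ, 0 < x → 0 < y →
      y * (1 + (Real.log x + Real.log T - Real.log y)) ≤ x * T := by
    intro x y hx hy
    have h := Real.log_le_sub_one_of_pos (show 0 < x * T / y by positivity)
    rw [Real.log_div (by positivity) hy.ne', Real.log_mul hx.ne' hT.ne'] at h
    calc _ ≤ y * (x * T / y) := by
          apply mul_le_mul_of_nonneg_left _ hy.le
          linarith
      _ = x * T := by field_simp
  have h1 := key a _ ha hp
  have h2 := key b _ hb hm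
  obtain ⟨w, hw⟩ : ∃ w, w = Real.log a + Real.log T - Real.log (γ + β) := ⟨_, rfl⟩
  have hw2 : Real.log b + Real.log T - Real.log (γ - β) = -w := by linarith
  rw [← hw] at h1
  rw [hw2] at h2
  have hL : Real.log (γ + β) - Real.log (γ - β) = T - 2 * w := by linarith
  rw [hL] at hη
  have h3 : η * T = (a + b) * T + β * T - 2 * γ + β * (T - 2 * w) := by
    rw [hη]; field_simp
  have h4 : 2 * β * T ≤ η * T := by nlinarith
  have h5 : 2 * β ≤ η := le_of_mul_le_mul_right h4 hT
  linarith
end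

section
/- For reals a > b > 0 set T = log(a/b); for β > 0 set γ = √(β² + a·b·T²) and η(a,b,β) = a + b + β − 2γ/T + (β/T)·log((γ+β)/(γ−β)). Then for every β > 0, η(a,b,β) ≥ 2β. -/
theorem eta_ge_two_beta (a b : ℝ) (hb : 0 < b) (hab : b < a)
    (β : ℝ) (hβ : 0 < β) :
    let T : ℝ := Real.log (a / b)
    let γ : ℝ := Real.sqrt (β ^ 2 + a * b * T ^ 2)
    let η : ℝ := a + b + β - 2 * γ / T + (β / T) * Real.log ((γ + β) / (γ - β))
    2 * β ≤ η := by
  intro T γ η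
  have ha : 0 < a := hb.trans hab
  have hT : 0 < T := Real.log_pos ((one_lt_div hb).2 hab)
  have hTe : T = Real.log a - Real.log b := Real.log_div ha.ne' hb.ne'
  have hpos : 0 < a * b * T ^ 2 := by positivity
  have hγ : γ ^ 2 = β ^ 2 + a * b * T ^ 2 := Real.sq_sqrt (by positivity)
  have hγ0 : 0 ≤ γ := Real.sqrt_nonneg _
  have hq : 0 < γ - β := by nlinarith
  have hp : 0 < γ + β := by linarith
  have hL : Real.log ((γ + β) / (γ - β)) = Real.log (γ + β) - Real.log (γ - β) :=
    Real.log_div hp.ne' hq.ne'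
  have hη : η = a + b + β - 2 * γ / T + (β / T) * Real.log ((γ + β) / (γ - β)) := rfl
  rw [hη, hL]
  clear_value η γ T
  have hprod : Real.log (γ + β) + Real.log (γ - β)
      = Real.log a + Real.log b + 2 * Real.log T := by
    rw [← Real.log_mul hp.ne' hq.ne', ← Real.log_mul ha.ne' hb.ne',
      show (γ + β) * (γ - β) = a * b * T ^ 2 by nlinarith,
      Real.log_mul (by positivity) (by positivity), Real.log_pow]
    norm_num
  have key : ∀ x p : ℝ, 0 < x → 0 < p →
      p * (Real.log x + Real.log T - Real.log p) ≤ x * T - p := by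
    intro x p hx hp
    have h := Real.log_le_sub_one_of_pos (show 0 < x * T / p by positivity)
    rw [Real.log_div (by positivity) hp.ne', Real.log_mul hx.ne' hT.ne'] at h
    have h2 := mul_le_mul_of_nonneg_left h hp.le
    have h3 : p * (x * T / p - 1) = x * T - p := by field_simp
    linarith
  have h1 := key a _ ha hp
  have h2 := key b _ hb hq
  generalize Real.log (γ + β) = P at *
  generalize Real.log (γ - β) = Q at *
  have e1 : Real.log a + Real.log T - P = (T - (P - Q)) / 2 := by linarith
  have e2 : Real.log b + Real.log T - Q = -((T - (P - Q)) / 2) := by linarith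
  rw [e1] at h1
  rw [e2] at h2
  have h : 0 ≤ ((a + b) * T - 2 * γ - β * (T - (P - Q))) / T :=
    div_nonneg (by linarith) hT.le
  have e : a + b + β - 2 * γ / T + β / T * (P - Q) - 2 * β
      = ((a + b) * T - 2 * γ - β * (T - (P - Q))) / T := by
    field_simp
    ring
  linarith
end

section
/- For reals a > b > 0 set T = log(a/b); for β > 0 set γ(β) = √(β² + a·b·T²) and η(a,b,β) = a + b + β − 2γ(β)/T + (β/T)·log((γ(β)+β)/(γ(β)−β)). Let β* = T·(a−b)/2. Then γ(β*) = T·(a+b)/2, (γ(β*)+β*)/(γ(β*)−β*) = a/b, and η(a,b,β*) = T·(a−b) = 2β*. -/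
theorem eta_at_critical_beta (a b : ℝ) (hb : 0 < b) (hab : b < a) :
    let T : ℝ := Real.log (a / b)
    let γ : ℝ → ℝ := fun β => Real.sqrt (β ^ 2 + a * b * T ^ 2)
    let η : ℝ → ℝ := fun β =>
      a + b + β - 2 * γ β / T + (β / T) * Real.log ((γ β + β) / (γ β - β))
    let βstar : ℝ := T * (a - b) / 2
    γ βstar = T * (a + b) / 2 ∧
    (γ βstar + βstar) / (γ βstar - βstar) = a / b ∧
    η βstar = T * (a - b) ∧
    η βstar = 2 * βstar := by
  intro T γ η βstar
  have hT : 0 < T := Real.log_pos ((one_lt_div hb).2 hab)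
  have h1 : γ βstar = T * (a + b) / 2 := by
    change Real.sqrt ((T * (a - b) / 2) ^ 2 + a * b * T ^ 2) = _
    rw [show (T * (a - b) / 2) ^ 2 + a * b * T ^ 2 = (T * (a + b) / 2) ^ 2 by ring]
    apply Real.sqrt_sq
    have : 0 < a + b := by linarith
    positivity
  have h2 : (γ βstar + βstar) / (γ βstar - βstar) = a / b := by
    rw [h1, show T * (a + b) / 2 + βstar = T * a by simp only [βstar]; ring,
      show T * (a + b) / 2 - βstar = T * b by simp only [βstar]; ring]
    exact mul_div_mul_left a b hT.ne'
  have h3 : η βstar = 2 * βstar := by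
    change a + b + βstar - 2 * γ βstar / T
      + (βstar / T) * Real.log ((γ βstar + βstar) / (γ βstar - βstar)) = _
    rw [h2, h1]
    change a + b + βstar - 2 * (T * (a + b) / 2) / T + (βstar / T) * T = _
    rw [div_mul_cancel₀ _ hT.ne', show 2 * (T * (a + b) / 2) / T = a + b by
      rw [div_eq_iff hT.ne']; ring]
    ring
  refine ⟨h1, h2, ?_, h3⟩
  rw [h3]
  simp only [βstar]
  ring
end
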